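/- arXiv:0801.3434 — 5 statements merged into one kernel-verified Lean document; each statement's English description precedes it below -/
import Mathlib

section
/- Let b : V × V → W be a bilinear map of finite abelian p-groups and let 𝒱 be a direct decomposition of V, with 𝓔(𝒱) its associated set of projection idempotents. Then 𝒱 is a ⊥-decomposition of b if, and only if, 𝓔(𝒱) ⊆ Sym(b). -/
/-!
The members of a direct decomposition generate `V`, so both sides of `b (e u) v = b u (e v)`, being
additive in `u` and in `v`, need only be compared for `u ∈ X` and `v ∈ Y` with `X, Y ∈ D`. There
`e = e_U` acts as the identity or as zero, and the two sides can differ only when exactly one of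
`X, Y` is `U`; then one side is zero and the other is `b u v`, which vanishes by orthogonality.
Conversely, if `X ≠ Y` then `b x y = b (e_X x) y = b x (e_X y) = b x 0 = 0`. This direction needs
`e_X` to exist (`exists_projIdem`), as the projection along the sum of the other members of `D`.
-/

/-- `Sym(b)`: the set of self-adjoint endomorphisms of a bilinear map `b : V × V → W`. -/
def SymSet {V W : Type*} [AddCommGroup V] [AddCommGroup W] (b : V →+ V →+ W) :
    Set (AddMonoid.End V) :=
  {f | ∀ u v : V, b (f u) v = b u (f v)}

/-- A direct decomposition of `V`: a set of nontrivial subgroups of which `V` is the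
internal direct sum. -/
def IsDirectDecomp {V : Type*} [AddCommGroup V] (D : Set (AddSubgroup V)) : Prop :=
  (∀ X ∈ D, X ≠ ⊥) ∧ sSupIndep D ∧ sSup D = ⊤

/-- The set `𝓔(𝒟)` of projection idempotents associated to a direct decomposition `𝒟`:
for each `U ∈ 𝒟` the endomorphism restricting to the identity on `U` and to zero on every
other member of `𝒟`. -/
def projIdems {V : Type*} [AddCommGroup V] (D : Set (AddSubgroup V)) :
    Set (AddMonoid.End V) :=
  {e | ∃ U ∈ D, (∀ x ∈ U, e x = x) ∧ ∀ U' ∈ D, U' ≠ U → ∀ x ∈ U', e x = 0}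

/-- Additive maps agreeing on every member of a direct decomposition are equal. -/
theorem IsDirectDecomp.hom_ext {V M : Type*} [AddCommGroup V] [AddCommGroup M]
    {D : Set (AddSubgroup V)} (hD : IsDirectDecomp D) {f g : V →+ M}
    (h : ∀ X ∈ D, ∀ x ∈ X, f x = g x) : f = g := by
  have hle : sSup D ≤ f.eqLocus g := sSup_le fun X hX x hx => h X hX x hx
  rw [hD.2.2] at hle
  ext x
  exact hle (AddSubgroup.mem_top x)

theorem IsDirectDecomp.exists_projIdem {V : Type*} [AddCommGroup V]
    {D : Set (AddSubgroup V)} (hD : IsDirectDecomp D) {U : AddSubgroup V} (hU : U ∈ D) :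
    ∃ e : AddMonoid.End V,
      (∀ x ∈ U, e x = x) ∧ ∀ U' ∈ D, U' ≠ U → ∀ x ∈ U', e x = 0 := by
  have hc : IsCompl U (sSup (D \ {U})) := by
    refine ⟨hD.2.1 hU, codisjoint_iff.2 ?_⟩
    rw [← sSup_insert, Set.insert_sdiff_singleton, Set.insert_eq_of_mem hU, hD.2.2]
  -- Complementary subgroups are complementary `ℤ`-submodules, for which Mathlib has projections.
  have hc' := (AddSubgroup.toIntSubmodule (M := V)).isCompl hc
  refine ⟨(Submodule.projection _ _ hc').toAddMonoidHom, fun x hx => ?_, fun U' hU' hne x hx => ?_⟩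
  · exact Submodule.projection_apply_left hc' ⟨x, hx⟩
  · have hx' : x ∈ sSup (D \ {U}) :=
      AddSubgroup.mem_sSup_of_mem (show U' ∈ D \ {U} from ⟨hU', hne⟩) hx
    exact Submodule.projection_apply_right hc' ⟨x, hx'⟩

/-- Let `b : V × V → W` be a bilinear map of finite abelian `p`-groups and `𝒟` a direct
decomposition of `V`.  Then `𝒟` is a `⊥`-decomposition of `b` if, and only if, its set of
projection idempotents is contained in `Sym(b)`. -/
theorem perp_decomp_iff_projections_symmetric {p : ℕ} (hp : p.Prime)
    {V W : Type*} [AddCommGroup V] [AddCommGroup W] [Finite V] [Finite W]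
    (hV : IsPGroup p (Multiplicative V)) (hW : IsPGroup p (Multiplicative W))
    (b : V →+ V →+ W) (D : Set (AddSubgroup V)) (hD : IsDirectDecomp D) :
    (∀ X ∈ D, ∀ Y ∈ D, X ≠ Y → ∀ x ∈ X, ∀ y ∈ Y, b x y = 0) ↔ projIdems D ⊆ SymSet b := by
  constructor
  · rintro h e ⟨U, hU, h1, h0⟩ u v
    -- Reduce first to `u ∈ X`, then to `v ∈ Y`.
    suffices H : (b.flip v).comp e = b.flip (e v) from DFunLike.congr_fun H u
    refine hD.hom_ext fun X hX x hx => ?_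
    suffices H : b (e x) = (b x).comp e from DFunLike.congr_fun H v
    refine hD.hom_ext fun Y hY y hy => ?_
    change b (e x) y = b x (e y)
    by_cases hXU : X = U <;> by_cases hYU : Y = U
    · subst hXU hYU
      rw [h1 x hx, h1 y hy]
    · subst hXU
      rw [h1 x hx, h0 Y hY hYU y hy, map_zero, h X hX Y hY (Ne.symm hYU) x hx y hy]
    · subst hYU
      rw [h0 X hX hXU x hx, h1 y hy, h X hX Y hY hXU x hx y hy, map_zero,
        AddMonoidHom.zero_apply]
    · rw [h0 X hX hXU x hx, h0 Y hY hYU y hy, map_zero, map_zero, AddMonoidHom.zero_apply]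
  · intro h X hX Y hY hne x hx y hy
    obtain ⟨e, h1, h0⟩ := hD.exists_projIdem hX
    have hs : b (e x) y = b x (e y) := h ⟨X, hX, h1, h0⟩ x y
    rwa [h1 x hx, h0 Y hY hne.symm y hy, map_zero] at hs
end

section
/- Let b : V × V → W be a θ-symmetric bilinear map of finite abelian p-groups. The map 𝒱 ↦ 𝓔(𝒱) sending a decomposition to its set of projection idempotents is a bijection from the set of fully refined ⊥-decompositions of b onto the set of frames of Sym(b). -/
/-- A `⊥`-decomposition of `b` relative to an ambient subgroup `U ≤ V`: a set of nontrivial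
subgroups of which `U` is the internal direct sum, distinct members being orthogonal. -/
def IsPerpDecompOn {V W : Type*} [AddCommGroup V] [AddCommGroup W] (b : V →+ V →+ W)
    (U : AddSubgroup V) (D : Set (AddSubgroup V)) : Prop :=
  (∀ X ∈ D, X ≠ ⊥) ∧ (∀ X ∈ D, X ≤ U) ∧ sSupIndep D ∧ sSup D = U ∧
  ∀ X ∈ D, ∀ Y ∈ D, X ≠ Y → ∀ x ∈ X, ∀ y ∈ Y, b x y = 0

/-- A `⊥`-decomposition of `b`. -/
def IsPerpDecomp {V W : Type*} [AddCommGroup V] [AddCommGroup W] (b : V →+ V →+ W)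
    (D : Set (AddSubgroup V)) : Prop :=
  IsPerpDecompOn b ⊤ D

/-- A fully refined `⊥`-decomposition: each member admits only the trivial
`⊥`-decomposition of itself, i.e. `b` restricted to each member is `⊥`-indecomposable. -/
def IsFullyRefinedPerpDecomp {V W : Type*} [AddCommGroup V] [AddCommGroup W]
    (b : V →+ V →+ W) (D : Set (AddSubgroup V)) : Prop :=
  IsPerpDecomp b D ∧
  ∀ U ∈ D, ∀ E : Set (AddSubgroup V), IsPerpDecompOn b U E → E = {U}

/-- A self-adjoint-primitive idempotent of `Sym(b)`: a nonzero idempotent in `Sym(b)` which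
is not a sum of pairwise orthogonal idempotents of `Sym(b)` other than `0` and itself. -/
def IsSelfAdjointPrimitive {V W : Type*} [AddCommGroup V] [AddCommGroup W]
    (b : V →+ V →+ W) (e : AddMonoid.End V) : Prop :=
  e ∈ SymSet b ∧ e * e = e ∧ e ≠ 0 ∧
  ¬ ∃ f g : AddMonoid.End V, f ∈ SymSet b ∧ g ∈ SymSet b ∧ f * f = f ∧ g * g = g ∧
      f * g = 0 ∧ g * f = 0 ∧ f ≠ 0 ∧ g ≠ 0 ∧ e = f + g

/-- A frame of `Sym(b)`: a set of pairwise orthogonal self-adjoint-primitive idempotents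
of `Sym(b)` which sum to `1`. -/
def IsFrame {V W : Type*} [AddCommGroup V] [AddCommGroup W] (b : V →+ V →+ W)
    (E : Set (AddMonoid.End V)) : Prop :=
  (∀ e ∈ E, IsSelfAdjointPrimitive b e) ∧
  (∀ e ∈ E, ∀ f ∈ E, e ≠ f → e * f = 0 ∧ f * e = 0) ∧
  ∑ᶠ e ∈ E, e = 1

section PerpFrames

variable {V W : Type*} [AddCommGroup V] [AddCommGroup W]

/-! ### Projections and orthogonal idempotents -/

/-- `e` restricts to the identity on `X` and to zero on `C`. When `V = X ⊕ C`, this says that `e`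
is the projection onto `X` along `C`. -/
def IsProjAlong (X C : AddSubgroup V) (e : AddMonoid.End V) : Prop :=
  (∀ x ∈ X, e x = x) ∧ ∀ x ∈ C, e x = 0

lemma exists_isProjAlong {X C : AddSubgroup V} (h : IsCompl X C) :
    ∃ e : AddMonoid.End V, IsProjAlong X C e := by
  have h' : IsCompl (AddSubgroup.toIntSubmodule X) (AddSubgroup.toIntSubmodule C) :=
    (AddSubgroup.toIntSubmodule (M := V)).isCompl_iff.mp h
  refine ⟨(Submodule.projection _ _ h').toAddMonoidHom, fun x hx => ?_, fun x hx => ?_⟩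
  · exact Submodule.projection_apply_left h' ⟨x, hx⟩
  · exact Submodule.projection_apply_right h' ⟨x, hx⟩

lemma exists_add_of_isCompl {X C : AddSubgroup V} (h : IsCompl X C) (v : V) :
    ∃ x ∈ X, ∃ c ∈ C, x + c = v :=
  AddSubgroup.mem_sup.mp (h.sup_eq_top ▸ AddSubgroup.mem_top v)

namespace IsProjAlong

variable {X C : AddSubgroup V} {e : AddMonoid.End V}

lemma apply_add (he : IsProjAlong X C e) {x c : V} (hx : x ∈ X) (hc : c ∈ C) :
    e (x + c) = x := by
  rw [map_add, he.1 x hx, he.2 c hc, add_zero]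

lemma unique (h : IsCompl X C) {e' : AddMonoid.End V} (he : IsProjAlong X C e)
    (he' : IsProjAlong X C e') : e = e' := by
  ext v
  obtain ⟨x, hx, c, hc, rfl⟩ := exists_add_of_isCompl h v
  rw [he.apply_add hx hc, he'.apply_add hx hc]

lemma apply_mem (h : IsCompl X C) (he : IsProjAlong X C e) (v : V) : e v ∈ X := by
  obtain ⟨x, hx, c, hc, rfl⟩ := exists_add_of_isCompl h v
  rwa [he.apply_add hx hc]

lemma range_eq (h : IsCompl X C) (he : IsProjAlong X C e) : AddMonoidHom.range e = X := by
  apply le_antisymm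
  · rintro _ ⟨v, rfl⟩
    exact he.apply_mem h v
  · exact fun x hx => ⟨x, he.1 x hx⟩

lemma mul_self (h : IsCompl X C) (he : IsProjAlong X C e) : e * e = e := by
  ext v
  exact he.1 _ (he.apply_mem h v)

/-- If `X` and `C` are mutually orthogonal then both `b (e u) v` and `b u (e v)` only see the
`X`-components of `u` and `v`. -/
lemma mem_symSet (b : V →+ V →+ W) (h : IsCompl X C) (he : IsProjAlong X C e)
    (hb : ∀ x ∈ X, ∀ c ∈ C, b x c = 0 ∧ b c x = 0) : e ∈ SymSet b := by
  intro u v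
  obtain ⟨x, hx, c, hc, rfl⟩ := exists_add_of_isCompl h u
  obtain ⟨y, hy, d, hd, rfl⟩ := exists_add_of_isCompl h v
  rw [he.apply_add hx hc, he.apply_add hy hd]
  simp [(hb x hx d hd).1, (hb y hy c hc).2]

end IsProjAlong

/-- The images of orthogonal self-adjoint endomorphisms are orthogonal. -/
lemma apply_eq_zero_of_mul_eq_zero {b : V →+ V →+ W} {f g : AddMonoid.End V}
    (hf : f ∈ SymSet b) (hfg : f * g = 0) (u v : V) : b (f u) (g v) = 0 := by
  rw [hf]
  have : f (g v) = 0 := DFunLike.congr_fun hfg v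
  rw [this, map_zero]

lemma disjoint_range_ker {e : AddMonoid.End V} (he : e * e = e) :
    Disjoint (AddMonoidHom.range e) (AddMonoidHom.ker e) := by
  rw [AddSubgroup.disjoint_def]
  rintro _ ⟨v, rfl⟩ h
  exact (DFunLike.congr_fun he v).symm.trans h

lemma isCompl_range_ker {e : AddMonoid.End V} (he : e * e = e) :
    IsCompl (AddMonoidHom.range e) (AddMonoidHom.ker e) := by
  refine ⟨disjoint_range_ker he, codisjoint_iff.mpr (eq_top_iff.mpr fun v _ => ?_)⟩
  refine AddSubgroup.mem_sup.mpr ⟨e v, ⟨v, rfl⟩, v - e v, ?_, by abel⟩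
  have : e (e v) = e v := DFunLike.congr_fun he v
  change e (v - e v) = 0
  rw [map_sub, this, sub_self]

lemma range_ne_bot {e : AddMonoid.End V} (he : e ≠ 0) : AddMonoidHom.range e ≠ ⊥ := by
  intro h
  apply he
  ext v
  have : e v ∈ AddMonoidHom.range e := ⟨v, rfl⟩
  rw [h] at this
  exact this

lemma le_sSup_diff {D : Set (AddSubgroup V)} {U U' : AddSubgroup V} (hU' : U' ∈ D)
    (hne : U' ≠ U) : U' ≤ sSup (D \ {U}) :=
  le_sSup (show U' ∈ D \ {U} from ⟨hU', hne⟩)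

lemma finsum_mem_end_apply {E : Set (AddMonoid.End V)} (hE : E.Finite) (v : V) :
    (∑ᶠ e ∈ E, e : AddMonoid.End V) v = ∑ e ∈ hE.toFinset, e v := by
  let φ : AddMonoid.End V →+ V :=
    { toFun := fun e => e v, map_zero' := rfl, map_add' := fun _ _ => rfl }
  change φ (∑ᶠ e ∈ E, e) = _
  rw [finsum_mem_eq_finite_toFinset_sum _ hE, map_sum]
  rfl

lemma mem_projIdems_iff {D : Set (AddSubgroup V)} {e : AddMonoid.End V} :
    e ∈ projIdems D ↔ ∃ U ∈ D, IsProjAlong U (sSup (D \ {U})) e := by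
  constructor
  · rintro ⟨U, hU, h1, h2⟩
    refine ⟨U, hU, h1, ?_⟩
    have : sSup (D \ {U}) ≤ AddMonoidHom.ker e := sSup_le fun U' hU' x hx =>
      h2 U' hU'.1 hU'.2 x hx
    exact fun x hx => this hx
  · rintro ⟨U, hU, h1, h2⟩
    exact ⟨U, hU, h1, fun U' hU' hne x hx => h2 x (le_sSup_diff hU' hne hx)⟩

/-! ### From decompositions to frames -/

namespace IsPerpDecompOn

variable {b : V →+ V →+ W} {U : AddSubgroup V} {D : Set (AddSubgroup V)}

lemma sup_sSup_diff (h : IsPerpDecompOn b U D) {X : AddSubgroup V} (hX : X ∈ D) :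
    X ⊔ sSup (D \ {X}) = U := by
  rw [← sSup_insert, Set.insert_sdiff_singleton, Set.insert_eq_of_mem hX]
  exact h.2.2.2.1

/-- A member is orthogonal, on both sides, to the sum of the other members. -/
lemma perp_sSup_diff (h : IsPerpDecompOn b U D) {X : AddSubgroup V} (hX : X ∈ D) :
    ∀ x ∈ X, ∀ c ∈ sSup (D \ {X}), b x c = 0 ∧ b c x = 0 := by
  intro x hx c hc
  have h1 : sSup (D \ {X}) ≤ AddMonoidHom.ker (b x) := sSup_le fun Y hY y hy =>
    h.2.2.2.2 X hX Y hY.1 (Ne.symm hY.2) x hx y hy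
  have h2 : sSup (D \ {X}) ≤ AddMonoidHom.ker (b.flip x) := sSup_le fun Y hY y hy =>
    h.2.2.2.2 Y hY.1 X hX hY.2 y hy x hx
  exact ⟨h1 hc, h2 hc⟩

end IsPerpDecompOn

namespace IsPerpDecomp

variable {b : V →+ V →+ W} {D : Set (AddSubgroup V)}

lemma isCompl (h : IsPerpDecomp b D) {U : AddSubgroup V} (hU : U ∈ D) :
    IsCompl U (sSup (D \ {U})) :=
  ⟨h.2.2.1 hU, codisjoint_iff.mpr (h.sup_sSup_diff hU)⟩

/-- A `⊥`-decomposition is the set of images of its projection idempotents. -/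
lemma image_range_projIdems (h : IsPerpDecomp b D) :
    (fun e : AddMonoid.End V => AddMonoidHom.range e) '' projIdems D = D := by
  ext U
  constructor
  · rintro ⟨e, he, rfl⟩
    obtain ⟨U, hU, he⟩ := mem_projIdems_iff.mp he
    rw [← he.range_eq (h.isCompl hU)] at hU
    exact hU
  · intro hU
    obtain ⟨e, he⟩ := exists_isProjAlong (h.isCompl hU)
    exact ⟨e, mem_projIdems_iff.mpr ⟨U, hU, he⟩, he.range_eq (h.isCompl hU)⟩

lemma finsum_projIdems [Finite V] (h : IsPerpDecomp b D) : ∑ᶠ e ∈ projIdems D, e = 1 := by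
  have hfin : (projIdems D).Finite :=
    have : Finite (AddMonoid.End V) := DFunLike.finite _
    Set.toFinite _
  -- It suffices that the sum fixes each member of `D` pointwise.
  suffices hle : sSup D ≤ AddMonoidHom.eqLocus (∑ᶠ e ∈ projIdems D, e : AddMonoid.End V)
      (1 : AddMonoid.End V) by
    ext v
    exact hle (h.2.2.2.1 ▸ AddSubgroup.mem_top v)
  refine sSup_le fun U hU x hx => ?_
  obtain ⟨e, he⟩ := exists_isProjAlong (h.isCompl hU)
  have heD : e ∈ projIdems D := mem_projIdems_iff.mpr ⟨U, hU, he⟩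
  change (∑ᶠ e ∈ projIdems D, e : AddMonoid.End V) x = x
  rw [finsum_mem_end_apply hfin, Finset.sum_eq_single e]
  · exact he.1 x hx
  · intro f hf hfe
    obtain ⟨U', hU', hf'⟩ := mem_projIdems_iff.mp (hfin.mem_toFinset.mp hf)
    have hne : U ≠ U' := by
      rintro rfl
      exact hfe (hf'.unique (h.isCompl hU) he)
    exact hf'.2 x (le_sSup_diff hU hne hx)
  · exact fun hn => absurd (hfin.mem_toFinset.mpr heD) hn

end IsPerpDecomp

/-- A splitting of the idempotent `f + g` into nonzero orthogonal self-adjoint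
idempotents splits its image orthogonally. -/
lemma isPerpDecompOn_pair {b : V →+ V →+ W} {f g : AddMonoid.End V} (hf : f ∈ SymSet b)
    (hg : g ∈ SymSet b) (hff : f * f = f) (hgg : g * g = g) (hfg : f * g = 0) (hgf : g * f = 0)
    (hf0 : f ≠ 0) (hg0 : g ≠ 0) :
    AddMonoidHom.range f ≠ AddMonoidHom.range g ∧
      IsPerpDecompOn b (AddMonoidHom.range (f + g))
        {AddMonoidHom.range f, AddMonoidHom.range g} := by
  have hdis : Disjoint (AddMonoidHom.range f) (AddMonoidHom.range g) := by
    refine (disjoint_range_ker hff).mono_right ?_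
    rintro _ ⟨v, rfl⟩
    exact DFunLike.congr_fun hfg v
  have hne : AddMonoidHom.range f ≠ AddMonoidHom.range g := hdis.ne (range_ne_bot hf0)
  have hfle : AddMonoidHom.range f ≤ AddMonoidHom.range (f + g) := by
    rintro _ ⟨v, rfl⟩
    refine ⟨f v, ?_⟩
    have h1 : f (f v) = f v := DFunLike.congr_fun hff v
    have h2 : g (f v) = 0 := DFunLike.congr_fun hgf v
    change f (f v) + g (f v) = f v
    rw [h1, h2, add_zero]
  have hgle : AddMonoidHom.range g ≤ AddMonoidHom.range (f + g) := by
    rintro _ ⟨v, rfl⟩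
    refine ⟨g v, ?_⟩
    have h1 : g (g v) = g v := DFunLike.congr_fun hgg v
    have h2 : f (g v) = 0 := DFunLike.congr_fun hfg v
    change f (g v) + g (g v) = g v
    rw [h1, h2, zero_add]
  refine ⟨hne, ?_, ?_, (sSupIndep_pair hne).mpr hdis, ?_, ?_⟩
  · rintro X (rfl | rfl)
    exacts [range_ne_bot hf0, range_ne_bot hg0]
  · rintro X (rfl | rfl)
    exacts [hfle, hgle]
  · rw [sSup_pair]
    refine le_antisymm (sup_le hfle hgle) ?_
    rintro _ ⟨v, rfl⟩
    exact AddSubgroup.mem_sup.mpr ⟨f v, ⟨v, rfl⟩, g v, ⟨v, rfl⟩, rfl⟩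
  · rintro X (rfl | rfl) Y (rfl | rfl) hXY _ ⟨u, rfl⟩ _ ⟨v, rfl⟩
    · exact absurd rfl hXY
    · exact apply_eq_zero_of_mul_eq_zero hf hfg u v
    · exact apply_eq_zero_of_mul_eq_zero hg hgf u v
    · exact absurd rfl hXY

lemma isFrame_projIdems [Finite V] {b : V →+ V →+ W} {D : Set (AddSubgroup V)}
    (hD : IsFullyRefinedPerpDecomp b D) : IsFrame b (projIdems D) := by
  obtain ⟨h, href⟩ := hD
  have h0 : IsPerpDecompOn b ⊤ D := h
  have horth : ∀ e ∈ projIdems D, ∀ f ∈ projIdems D, e ≠ f → e * f = 0 := by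
    intro e he f hf hef
    obtain ⟨U, hU, he⟩ := mem_projIdems_iff.mp he
    obtain ⟨U', hU', hf⟩ := mem_projIdems_iff.mp hf
    have hne : U' ≠ U := by
      rintro rfl
      exact hef (he.unique (h.isCompl hU) hf)
    ext v
    exact he.2 _ (le_sSup_diff hU' hne (hf.apply_mem (h.isCompl hU') v))
  refine ⟨fun e he => ?_, fun e he f hf hef => ⟨horth e he f hf hef, horth f hf e he hef.symm⟩,
    h.finsum_projIdems⟩
  obtain ⟨U, hU, he⟩ := mem_projIdems_iff.mp he
  have hc := h.isCompl hU
  refine ⟨he.mem_symSet b hc (h0.perp_sSup_diff hU), he.mul_self hc, ?_, ?_⟩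
  · rintro rfl
    refine h.1 U hU ((AddSubgroup.eq_bot_iff_forall U).mpr fun x hx => ?_)
    exact (he.1 x hx).symm
  · rintro ⟨f, g, hf, hg, hff, hgg, hfg, hgf, hf0, hg0, rfl⟩
    obtain ⟨hne, hdec⟩ := isPerpDecompOn_pair hf hg hff hgg hfg hgf hf0 hg0
    rw [he.range_eq hc] at hdec
    have hEq := href U hU _ hdec
    have h1 : AddMonoidHom.range f ∈ ({U} : Set (AddSubgroup V)) := hEq ▸ Set.mem_insert _ _
    have h2 : AddMonoidHom.range g ∈ ({U} : Set (AddSubgroup V)) :=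
      hEq ▸ Set.mem_insert_of_mem _ rfl
    exact hne (h1.trans h2.symm)

/-! ### From frames to decompositions -/

/-- The image of a self-adjoint-primitive idempotent is `⊥`-indecomposable. -/
lemma IsSelfAdjointPrimitive.eq_singleton {b : V →+ V →+ W} {e : AddMonoid.End V}
    (he : IsSelfAdjointPrimitive b e) {D : Set (AddSubgroup V)}
    (hD : IsPerpDecompOn b (AddMonoidHom.range e) D) : D = {AddMonoidHom.range e} := by
  obtain ⟨hsym, hee, he0, hprim⟩ := he
  have hne : D.Nonempty := by
    rw [Set.nonempty_iff_ne_empty]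
    rintro rfl
    exact range_ne_bot he0 (hD.2.2.2.1.symm.trans sSup_empty)
  refine Set.eq_singleton_iff_nonempty_unique_mem.mpr ⟨hne, fun X hX => ?_⟩
  set Y := sSup (D \ {X}) with hY
  have hXY : X ⊔ Y = AddMonoidHom.range e := hD.sup_sSup_diff hX
  by_contra hXne
  have hYbot : Y ≠ ⊥ := by
    intro h
    rw [h, sup_bot_eq] at hXY
    exact hXne hXY
  have hYle : Y ≤ AddMonoidHom.range e := hXY ▸ le_sup_right
  have hfix : ∀ x ∈ AddMonoidHom.range e, e x = x := by
    rintro _ ⟨v, rfl⟩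
    exact DFunLike.congr_fun hee v
  have hdis : Disjoint X Y := hD.2.2.1 hX
  have hck := isCompl_range_ker hee
  have hc : IsCompl X (Y ⊔ AddMonoidHom.ker e) := by
    refine ⟨?_, codisjoint_iff.mpr ?_⟩
    · exact hdis.disjoint_sup_right_of_disjoint_sup_left (hXY ▸ hck.disjoint)
    · rw [← sup_assoc, hXY, hck.sup_eq_top]
  obtain ⟨f, hf⟩ := exists_isProjAlong hc
  have hfsym : f ∈ SymSet b := by
    refine hf.mem_symSet b hc fun x hx c hcm => ?_
    obtain ⟨y, hy, k, hk, rfl⟩ := AddSubgroup.mem_sup.mp hcm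
    have hk : e k = 0 := hk
    have hex := hfix x (hD.2.1 X hX hx)
    have h1 : b x k = 0 := by rw [← hex, hsym, hk, map_zero]
    have h2 : b k x = 0 := by rw [← hex, ← hsym, hk, map_zero, AddMonoidHom.zero_apply]
    obtain ⟨h3, h4⟩ := hD.perp_sSup_diff hX x hx y hy
    simp [h1, h2, h3, h4]
  have hff : f * f = f := hf.mul_self hc
  have hef : e * f = f := by
    ext v
    exact hfix _ (hD.2.1 X hX (hf.apply_mem hc v))
  have hfe : f * e = f := by
    ext v
    have hk : v - e v ∈ AddMonoidHom.ker e := by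
      change e (v - e v) = 0
      rw [map_sub, hfix (e v) ⟨v, rfl⟩, sub_self]
    have := hf.2 _ (AddSubgroup.mem_sup_right (S := Y) hk)
    rw [map_sub, sub_eq_zero] at this
    exact this.symm
  refine hprim ⟨f, e - f, hfsym, ?_, hff, ?_, ?_, ?_, ?_, ?_, by abel⟩
  · intro u v
    change b (e u - f u) v = b u (e v - f v)
    rw [map_sub, AddMonoidHom.sub_apply, map_sub, hsym, hfsym]
  · rw [mul_sub, sub_mul, sub_mul, hee, hef, hfe, hff]; abel
  · rw [mul_sub, hfe, hff, sub_self]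
  · rw [sub_mul, hef, hff, sub_self]
  · rintro rfl
    exact hD.1 X hX ((AddSubgroup.eq_bot_iff_forall X).mpr fun x hx => (hf.1 x hx).symm)
  · intro h
    refine hYbot ((AddSubgroup.eq_bot_iff_forall Y).mpr fun y hy => ?_)
    rw [← hfix y (hYle hy), sub_eq_zero.mp h]
    exact hf.2 y (AddSubgroup.mem_sup_left hy)

/-- The images of the members of a frame form a `⊥`-decomposition. -/
lemma IsFrame.isPerpDecomp [Finite V] {b : V →+ V →+ W} {E : Set (AddMonoid.End V)}
    (hE : IsFrame b E) :
    IsPerpDecomp b ((fun e : AddMonoid.End V => AddMonoidHom.range e) '' E) := by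
  obtain ⟨hprim, horth, hsum⟩ := hE
  refine ⟨?_, fun _ _ => le_top, ?_, ?_, ?_⟩
  · rintro _ ⟨e, he, rfl⟩
    exact range_ne_bot (hprim e he).2.2.1
  · rintro _ ⟨e, he, rfl⟩
    -- All other images lie in `ker e`.
    refine (disjoint_range_ker (hprim e he).2.1).mono_right (sSup_le ?_)
    rintro _ ⟨⟨f, hf, rfl⟩, hne⟩ _ ⟨v, rfl⟩
    have hef : e ≠ f := by
      rintro rfl
      exact hne rfl
    exact DFunLike.congr_fun (horth e he f hf hef).1 v
  · refine eq_top_iff.mpr fun v _ => ?_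
    have hfin : E.Finite :=
      have : Finite (AddMonoid.End V) := DFunLike.finite _
      Set.toFinite _
    have hv : (∑ᶠ e ∈ E, e : AddMonoid.End V) v = v := DFunLike.congr_fun hsum v
    rw [finsum_mem_end_apply hfin] at hv
    rw [← hv]
    refine sum_mem fun e he => ?_
    exact (le_sSup (Set.mem_image_of_mem _ (hfin.mem_toFinset.mp he)) :
      AddMonoidHom.range e ≤ _) ⟨v, rfl⟩
  · rintro _ ⟨e, he, rfl⟩ _ ⟨f, hf, rfl⟩ hne _ ⟨u, rfl⟩ _ ⟨v, rfl⟩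
    have hef : e ≠ f := by
      rintro rfl
      exact hne rfl
    exact apply_eq_zero_of_mul_eq_zero (hprim e he).1 (horth e he f hf hef).1 u v

/-- A frame is recovered from the decomposition given by its images. -/
lemma IsFrame.projIdems_image_range [Finite V] {b : V →+ V →+ W} {E : Set (AddMonoid.End V)}
    (hE : IsFrame b E) :
    projIdems ((fun e : AddMonoid.End V => AddMonoidHom.range e) '' E) = E := by
  have hD := hE.isPerpDecomp
  set D := (fun e : AddMonoid.End V => AddMonoidHom.range e) '' E with hDdef
  have key : ∀ e ∈ E, IsProjAlong (AddMonoidHom.range e)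
      (sSup (D \ {AddMonoidHom.range e})) e := by
    intro e he
    constructor
    · rintro _ ⟨v, rfl⟩
      exact DFunLike.congr_fun (hE.1 e he).2.1 v
    · have : sSup (D \ {AddMonoidHom.range e}) ≤ AddMonoidHom.ker e := by
        refine sSup_le ?_
        rintro _ ⟨⟨f, hf, rfl⟩, hne⟩ _ ⟨v, rfl⟩
        have hef : e ≠ f := by
          rintro rfl
          exact hne rfl
        exact DFunLike.congr_fun (hE.2.1 e he f hf hef).1 v
      exact fun x hx => this hx
  ext e
  rw [mem_projIdems_iff]
  constructor
  · rintro ⟨_, ⟨f, hf, rfl⟩, he⟩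
    have := he.unique (hD.isCompl (Set.mem_image_of_mem _ hf)) (key f hf)
    rwa [this]
  · exact fun he => ⟨_, Set.mem_image_of_mem _ he, key e he⟩

end PerpFrames

/-- For a `θ`-symmetric bilinear map `b` of finite abelian `p`-groups, the map
`𝒟 ↦ 𝓔(𝒟)` is a bijection from the set of fully refined `⊥`-decompositions of `b`
onto the set of frames of `Sym(b)`. -/
theorem frames_biject_fully_refined_perp_decomps {p : ℕ} (hp : p.Prime)
    {V W : Type*} [AddCommGroup V] [AddCommGroup W] [Finite V] [Finite W]
    (hV : IsPGroup p (Multiplicative V)) (hW : IsPGroup p (Multiplicative W))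
    (b : V →+ V →+ W) (θ : W ≃+ W) (hθ2 : ∀ w, θ (θ w) = w)
    (hθ : ∀ u v : V, b u v = θ (b v u)) :
    Set.BijOn (projIdems (V := V))
      {D | IsFullyRefinedPerpDecomp b D} {E | IsFrame b E} := by
  refine ⟨fun D hD => isFrame_projIdems hD, fun D hD D' hD' hEq => ?_, fun E hE => ?_⟩
  · rw [← hD.1.image_range_projIdems, hEq, hD'.1.image_range_projIdems]
  · refine ⟨_, ⟨hE.isPerpDecomp, ?_⟩, hE.projIdems_image_range⟩
    rintro _ ⟨e, he, rfl⟩ D hD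
    exact (hE.1 e he).eq_singleton hD
end

section
/- Let K be a finite field of characteristic p and let φ be a ring automorphism of the matrix ring M_n(K). Then there exist D ∈ GL_n(K) and a field automorphism σ of K such that φ(X) = D⁻¹ X^σ D for all X ∈ M_n(K), where X^σ denotes application of σ to every entry of X. -/
/-!
A ring automorphism `φ` of `M_n(K)` preserves the center, which consists of the scalar matrices,
so it acts on scalars through an automorphism `σ` of `K` (`exists_scalar_ringEquiv`). Composing
`φ` with the entrywise action of `σ⁻¹` gives a `K`-algebra automorphism of `M_n(K)`, which is inner
because every algebra automorphism of the endomorphism ring of a vector space is a conjugation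
(`AlgEquiv.eq_linearEquivConjAlgEquiv`).
-/

/-- The restriction of a ring automorphism of `M_n(K)` to the center `K`. It is a field
endomorphism, hence injective, and surjectivity follows by finiteness of `K`. -/
theorem exists_scalar_ringEquiv {K : Type*} [Field K] [Finite K] {n : ℕ} [NeZero n]
    (φ : Matrix (Fin n) (Fin n) K ≃+* Matrix (Fin n) (Fin n) K) :
    ∃ σ : K ≃+* K, ∀ c, φ (Matrix.scalar (Fin n) c) = Matrix.scalar (Fin n) (σ c) := by
  have hcentral (c : K) : ∃ d, Matrix.scalar (Fin n) d = φ (Matrix.scalar (Fin n) c) := by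
    have h : φ (Matrix.scalar (Fin n) c) ∈ Set.center (Matrix (Fin n) (Fin n) K) := by
      rw [Semigroup.mem_center_iff]
      intro X
      obtain ⟨Y, rfl⟩ := φ.surjective X
      rw [← map_mul, ← map_mul, (Matrix.scalar_commute c (Commute.all c) Y).eq]
    rwa [Matrix.center_eq_range] at h
  choose s hs using hcentral
  have hinj {a b : K} (h : Matrix.scalar (Fin n) a = Matrix.scalar (Fin n) b) : a = b :=
    Matrix.scalar_inj.mp h
  let f : K →+* K :=
    { toFun := s
      map_one' := hinj (by simp only [hs, map_one])
      map_mul' := fun a b => hinj (by simp only [hs, map_mul])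
      map_zero' := hinj (by simp only [hs, map_zero])
      map_add' := fun a b => hinj (by simp only [hs, map_add]) }
  exact ⟨RingEquiv.ofBijective f (Finite.injective_iff_bijective.mp f.injective),
    fun c => (hs c).symm⟩

/-- The Skolem–Noether theorem for `K`-algebra automorphisms of `M_n(K)`. -/
theorem exists_isUnit_conj_of_algEquiv {K : Type*} [Field K] {n : ℕ}
    (ψ : Matrix (Fin n) (Fin n) K ≃ₐ[K] Matrix (Fin n) (Fin n) K) :
    ∃ D : Matrix (Fin n) (Fin n) K, IsUnit D ∧ ∀ X, ψ X = D⁻¹ * X * D := by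
  let τ := Matrix.toLinAlgEquiv' (R := K) (n := Fin n)
  obtain ⟨e, he⟩ := ((τ.symm.trans ψ).trans τ).eq_linearEquivConjAlgEquiv
  have hDE : τ.symm e.symm.toLinearMap * τ.symm e.toLinearMap = 1 := by
    rw [← map_mul, Module.End.mul_eq_comp, LinearEquiv.symm_comp, ← Module.End.one_eq_id, map_one]
  refine ⟨τ.symm e.symm.toLinearMap, IsUnit.of_mul_eq_one _ hDE, fun X => ?_⟩
  rw [Matrix.inv_eq_right_inv hDE]
  apply τ.injective
  have h := congrArg (fun g => g (τ X)) he
  simp only [AlgEquiv.trans_apply, AlgEquiv.symm_apply_apply] at h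
  rw [h]
  simp only [map_mul, AlgEquiv.apply_symm_apply]
  rfl


/-- Skolem–Noether: every ring automorphism `φ` of `M_n(K)`, `K` a finite field of
characteristic `p`, has the form `φ(X) = D⁻¹ X^σ D` for some `D ∈ GL_n(K)` and some field
automorphism `σ` of `K` (applied entrywise to `X`). -/
theorem skolem_noether_finite_field {p : ℕ} (hp : p.Prime) {K : Type*} [Field K] [Finite K]
    (hchar : CharP K p) {n : ℕ}
    (φ : Matrix (Fin n) (Fin n) K ≃+* Matrix (Fin n) (Fin n) K) :
    ∃ (D : Matrix (Fin n) (Fin n) K) (σ : K ≃+* K), IsUnit D ∧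
      ∀ X : Matrix (Fin n) (Fin n) K, φ X = D⁻¹ * X.map σ * D := by

  rcases Nat.eq_zero_or_pos n with rfl | hn
  · exact ⟨1, RingEquiv.refl K, isUnit_one, fun X => Subsingleton.elim _ _⟩
  have : NeZero n := ⟨hn.ne'⟩
  obtain ⟨σ, hσ⟩ := exists_scalar_ringEquiv φ
  let ψ : Matrix (Fin n) (Fin n) K ≃ₐ[K] Matrix (Fin n) (Fin n) K :=
    AlgEquiv.ofRingEquiv (f := σ.symm.mapMatrix.trans φ) (fun c => by
      have h : σ.symm.mapMatrix (Matrix.scalar (Fin n) c) = Matrix.scalar (Fin n) (σ.symm c) := by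
        ext i j
        simp [Matrix.diagonal_apply, apply_ite σ.symm]
      change φ (σ.symm.mapMatrix (Matrix.scalar (Fin n) c)) = Matrix.scalar (Fin n) c
      rw [h, hσ, RingEquiv.apply_symm_apply])
  obtain ⟨D, hD, h⟩ := exists_isUnit_conj_of_algEquiv ψ
  refine ⟨D, σ, hD, fun X => ?_⟩
  rw [← h]
  change φ X = φ (σ.symm.mapMatrix (X.map σ))
  congr 1
  ext i j
  simp
end

section
/- Let R be a ring and e ∈ R such that e² − e lies in the Jacobson radical of R and (e² − e)ⁿ = 0 for some positive integer n. Define ê := eⁿ · Σ_{j=0}^{n−1} C(2n−1, j) e^{n−1−j} (1−e)^j, where C denotes binomial coefficients. Then: (i) ê² = ê; (ii) e ≡ ê modulo the Jacobson radical of R; (iii) applying the same formula to 1 − e yields 1 − ê; and (iv) if * is an involution on R and e* = e, then ê* = ê. -/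
/-!
Everything takes place in the commutative ring `ℤ[X]`. For elements `x`, `y` of a commutative ring
put `F(x, y) = xⁿ ∑_{j<n} C(2n-1, j) x^{n-1-j} y^j`, so that `ê` is the value at `e` of the
polynomial `P = F(X, 1 - X)`, and the formula applied to `1 - e` is the value of
`Q = F(1 - X, X)`. The summands of `F(x, y)` and `F(y, x)` are the two halves of the binomial
expansion of `(x + y)^{2n-1}` (`liftPoly_add_swap`), hence `P + Q = 1`, so the lift of `1 - e` is `1 - ê`.
Next, `P Q` is a multiple of `(X (1 - X))ⁿ`, so `ê (1 - ê) = 0`; and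
`P - X = (1 - X) P - X Q` is a multiple of `X (1 - X)` because `n > 0`, so `ê - e` lies in the radical.
Finally, an involution fixing `e` fixes every integer polynomial in `e`
(`antihom_aeval`).
-/

/-- The homogeneous form `xⁿ ∑_{j<n} C(2n-1, j) x^{n-1-j} y^j`; the lift of `e` is its value at
`(e, 1 - e)`. -/
def liftPoly {A : Type*} [Ring A] (n : ℕ) (x y : A) : A :=
  x ^ n * ∑ j ∈ Finset.range n, ((2 * n - 1).choose j) • (x ^ (n - 1 - j) * y ^ j)

lemma liftPoly_eq_sum {A : Type*} [CommRing A] (n : ℕ) (x y : A) :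
    liftPoly n x y =
      ∑ j ∈ Finset.range n, x ^ (2 * n - 1 - j) * y ^ j * ((2 * n - 1).choose j : A) := by
  unfold liftPoly
  rw [Finset.mul_sum]
  refine Finset.sum_congr rfl fun j hj => ?_
  have hj' := Finset.mem_range.1 hj
  have h : 2 * n - 1 - j = n + (n - 1 - j) := by omega
  rw [h, pow_add, nsmul_eq_mul]
  ring

/-- The lower half of the binomial expansion of `(y + x)^{2n-1}` is `liftPoly n x y`, and the upper
half, reflected by `j ↦ 2n-1-j`, is `liftPoly n y x`. -/
lemma liftPoly_add_swap {A : Type*} [CommRing A] (n : ℕ) (hn : 0 < n) (x y : A) :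
    liftPoly n x y + liftPoly n y x = (y + x) ^ (2 * n - 1) := by
  have h2 : 2 * n - 1 + 1 = n + n := by omega
  rw [add_pow, h2, Finset.sum_range_add, liftPoly_eq_sum, liftPoly_eq_sum]
  congr 1
  · refine Finset.sum_congr rfl fun j hj => ?_
    ring
  · rw [← Finset.sum_range_reflect]
    refine Finset.sum_congr rfl fun j hj => ?_
    have hj' := Finset.mem_range.1 hj
    have h3 : 2 * n - 1 - (n - 1 - j) = n + j := by omega
    have h4 : 2 * n - 1 - (n + j) = n - 1 - j := by omega
    have h5 : (2 * n - 1).choose (n - 1 - j) = (2 * n - 1).choose (n + j) :=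
      Nat.choose_symm_of_eq_add (by omega)
    rw [h3, h4, h5]

lemma map_liftPoly {A B : Type*} [Ring A] [Ring B] (f : A →+* B) (n : ℕ) (x y : A) :
    f (liftPoly n x y) = liftPoly n (f x) (f y) := by
  simp [liftPoly, map_sum]

open Polynomial in
/-- Powers of `e` commute with each other, so reversing products does not change a polynomial
in `e`. -/
lemma antihom_aeval {R : Type*} [Ring R] (e : R) (st : R → R)
    (hadd : ∀ a b, st (a + b) = st a + st b) (hmul : ∀ a b, st (a * b) = st b * st a)
    (hinv : ∀ a, st (st a) = a) (he : st e = e) (p : ℤ[X]) :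
    st (aeval e p) = aeval e p := by
  have h1 : st 1 = 1 := by
    have h := hmul 1 (st 1)
    rw [one_mul, hinv, one_mul] at h
    exact h.symm
  have hpow : ∀ k : ℕ, st (e ^ k) = e ^ k := by
    intro k
    induction k with
    | zero => simpa using h1
    | succ k ih => rw [pow_succ, hmul, ih, he, ← pow_succ', pow_succ]
  induction p using Polynomial.induction_on' with
  | add p q hp hq => rw [map_add, hadd, hp, hq]
  | monomial k a =>
    have h := map_zsmul (AddMonoidHom.mk' st hadd) a (e ^ k)
    simp only [AddMonoidHom.mk'_apply, hpow] at h
    simpa [aeval_monomial, ← zsmul_eq_mul] using h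


/-- Lifting idempotents: if `e² - e` lies in the Jacobson radical and `(e² - e)ⁿ = 0`, then
`ê := eⁿ ∑_{j<n} C(2n-1, j) e^{n-1-j} (1-e)^j` is an idempotent congruent to `e` modulo the
radical; the same formula applied to `1 - e` yields `1 - ê`, and `ê` is fixed by any
involution fixing `e`. -/
theorem lift_idempotent {R : Type*} [Ring R] (e : R) (n : ℕ) (hn : 0 < n)
    (hrad : e ^ 2 - e ∈ Ideal.jacobson (⊥ : Ideal R))
    (hnil : (e ^ 2 - e) ^ n = 0) :
    ∀ lift : R → R,
      (lift = fun a : R => a ^ n * ∑ j ∈ Finset.range n,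
          ((2 * n - 1).choose j) • (a ^ (n - 1 - j) * (1 - a) ^ j)) →
      (lift e * lift e = lift e) ∧
      (lift e - e ∈ Ideal.jacobson (⊥ : Ideal R)) ∧
      (lift (1 - e) = 1 - lift e) ∧
      (∀ st : R → R, (∀ a b, st (a + b) = st a + st b) →
        (∀ a b, st (a * b) = st b * st a) → (∀ a, st (st a) = a) →
        st e = e → st (lift e) = lift e) := by
  intro lift hlift
  have hl : ∀ a, lift a = liftPoly n a (1 - a) := fun a => by rw [hlift]; rfl
  let φ : Polynomial ℤ →+* R := (Polynomial.aeval e : Polynomial ℤ →ₐ[ℤ] R).toRingHom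
  have hφX : φ Polynomial.X = e := Polynomial.aeval_X e
  obtain ⟨P, hP⟩ : ∃ P : Polynomial ℤ, P = liftPoly n Polynomial.X (1 - Polynomial.X) := ⟨_, rfl⟩
  obtain ⟨Q, hQ⟩ : ∃ Q : Polynomial ℤ, Q = liftPoly n (1 - Polynomial.X) Polynomial.X := ⟨_, rfl⟩
  have hPe : lift e = φ P := by rw [hl, hP, map_liftPoly, map_sub, map_one, hφX]
  have hQe : lift (1 - e) = φ Q := by
    rw [hl, hQ, map_liftPoly, map_sub, map_one, hφX, sub_sub_cancel]
  have hPQ : P + Q = 1 := by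
    rw [hP, hQ, liftPoly_add_swap n hn, sub_add_cancel, one_pow]
  have hPd : (Polynomial.X : Polynomial ℤ) ^ n ∣ P := hP ▸ Dvd.intro _ rfl
  have hQd : (1 - Polynomial.X : Polynomial ℤ) ^ n ∣ Q := hQ ▸ Dvd.intro _ rfl
  have hφu : φ (Polynomial.X ^ 2 - Polynomial.X) = e ^ 2 - e := by
    rw [map_sub, map_pow, hφX]
  refine ⟨?_, ?_, ?_, ?_⟩
  · obtain ⟨a, ha⟩ := hPd
    obtain ⟨b, hb⟩ := hQd
    have h : P * P - P = -((-1) ^ n * a * b) * (Polynomial.X ^ 2 - Polynomial.X) ^ n := by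
      have h1 : (Polynomial.X ^ 2 - Polynomial.X : Polynomial ℤ) ^ n
          = (-1) ^ n * (Polynomial.X ^ n * (1 - Polynomial.X) ^ n) := by
        rw [← mul_pow, ← mul_pow]
        congr 1
        ring
      have h2 : ((-1 : Polynomial ℤ) ^ n) * (-1) ^ n = 1 := by
        rw [← mul_pow]; simp
      have h3 : P * P - P = -(P * Q) := by linear_combination P * hPQ
      rw [h3, h1, ha, hb]
      linear_combination (-(Polynomial.X ^ n * a * ((1 - Polynomial.X) ^ n * b))) * (-h2)
    have h' := congrArg φ h
    rw [map_mul, map_pow, hφu, hnil, mul_zero, map_sub, map_mul] at h'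
    rw [hPe]
    exact sub_eq_zero.1 h'
  · obtain ⟨a, ha⟩ := (dvd_pow_self _ hn.ne').trans hPd
    obtain ⟨b, hb⟩ := (dvd_pow_self _ hn.ne').trans hQd
    have h : P - Polynomial.X = (b - a) * (Polynomial.X ^ 2 - Polynomial.X) := by
      linear_combination (1 - Polynomial.X) * ha - Polynomial.X * hb + Polynomial.X * hPQ
    have h' := congrArg φ h
    rw [map_mul, hφu, map_sub, hφX] at h'
    rw [hPe, h']
    exact Ideal.mul_mem_left _ _ hrad
  · rw [hQe, hPe, ← map_one φ, ← map_sub, ← hPQ, add_sub_cancel_left]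
  · intro st hadd hmul hinv he
    rw [hPe]
    exact antihom_aeval e st hadd hmul hinv he P
end

section
/- Let p be a prime and define the alternating bilinear map b : 𝔽_p³ × 𝔽_p³ → 𝔽_p³ by b(u,v) = (u₁v₂ − u₂v₁, u₁v₃ − u₃v₁, u₂v₃ − u₃v₂). Then Adj(b) = { (α·id, α·id) : α ∈ 𝔽_p }; that is, every pair (f,g) of endomorphisms of 𝔽_p³ with b(f(u),v) = b(u,g(v)) for all u,v has f = g = α·id for some scalar α. Consequently b is ⊥-indecomposable and Adj(b) is isomorphic, as a ring with involution, to 𝔽_p with the identity involution. -/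
/-!
Comparing the coordinates of `b(f eᵢ, eⱼ) = b(eᵢ, g eⱼ)` for `i ≠ j` kills every off-diagonal
matrix entry of `f` and `g`, and forces `fᵢᵢ = gⱼⱼ` whenever `i ≠ j`. As there are three indices,
all six diagonal entries agree, so `f = g` is a scalar.

For indecomposability: if `V = X ⊕ Y` with `b(X, Y) = 0`, the projection `π` onto `X` along `Y`
satisfies `b(π u, v) = b(π u, π v) = b(u, π v)`, so `π` is a scalar; since it is the identity on
`X ≠ 0` and zero on `Y ≠ 0`, this scalar would be both `1` and `0`.
-/

/-- The alternating bilinear map `b : 𝔽_p³ × 𝔽_p³ → 𝔽_p³` of the relatively free class-2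
exponent-`p` group of rank 3:
`b(u,v) = (u₁v₂ - u₂v₁, u₁v₃ - u₃v₁, u₂v₃ - u₃v₂)`. -/
def freeRank3Bi (p : ℕ) (u v : Fin 3 → ZMod p) : Fin 3 → ZMod p :=
  ![u 0 * v 1 - u 1 * v 0, u 0 * v 2 - u 2 * v 0, u 1 * v 2 - u 2 * v 1]

theorem freeRank3Bi_add_left (p : ℕ) (u u' v : Fin 3 → ZMod p) :
    freeRank3Bi p (u + u') v = freeRank3Bi p u v + freeRank3Bi p u' v := by
  ext i
  fin_cases i <;> simp [freeRank3Bi] <;> ring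

theorem freeRank3Bi_swap (p : ℕ) (u v : Fin 3 → ZMod p) :
    freeRank3Bi p u v = -freeRank3Bi p v u := by
  ext i
  fin_cases i <;> simp [freeRank3Bi] <;> ring

theorem freeRank3Bi_add_right (p : ℕ) (u v v' : Fin 3 → ZMod p) :
    freeRank3Bi p u (v + v') = freeRank3Bi p u v + freeRank3Bi p u v' := by
  ext i
  fin_cases i <;> simp [freeRank3Bi] <;> ring

/-- The adjoint pairs of `b` are exactly the scalar pairs `(α·1, α·1)`. -/
theorem freeRank3Bi_adjoint_iff {p : ℕ} (f g : Module.End (ZMod p) (Fin 3 → ZMod p)) :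
    (∀ u v : Fin 3 → ZMod p, freeRank3Bi p (f u) v = freeRank3Bi p u (g v)) ↔
      ∃ α : ZMod p, f = α • (1 : Module.End (ZMod p) (Fin 3 → ZMod p)) ∧
        g = α • (1 : Module.End (ZMod p) (Fin 3 → ZMod p)) := by
  constructor
  · intro h
    -- The coordinates of `b(f eᵢ, eⱼ) = b(eᵢ, g eⱼ)`, `i ≠ j`, form a linear system for the
    -- matrix entries of `f` and `g`.
    have key (i j k : Fin 3) := congrFun (h (Pi.single i 1) (Pi.single j 1)) k
    have h01 := And.intro (key 0 1 0) (And.intro (key 0 1 1) (key 0 1 2))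
    have h02 := And.intro (key 0 2 0) (And.intro (key 0 2 1) (key 0 2 2))
    have h10 := And.intro (key 1 0 0) (And.intro (key 1 0 1) (key 1 0 2))
    have h12 := And.intro (key 1 2 0) (And.intro (key 1 2 1) (key 1 2 2))
    have h20 := And.intro (key 2 0 0) (And.intro (key 2 0 1) (key 2 0 2))
    have h21 := And.intro (key 2 1 0) (And.intro (key 2 1 1) (key 2 1 2))
    simp [freeRank3Bi] at h01 h02 h10 h12 h20 h21
    refine ⟨f (Pi.single 0 1) 0, ?_, ?_⟩
    · refine LinearMap.pi_ext' fun i => LinearMap.ext_ring (funext fun k => ?_)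
      fin_cases i <;> fin_cases k <;> simp <;> grind
    · refine LinearMap.pi_ext' fun i => LinearMap.ext_ring (funext fun k => ?_)
      fin_cases i <;> fin_cases k <;> simp <;> grind
  · rintro ⟨α, rfl, rfl⟩ u v
    ext i
    fin_cases i <;> simp [freeRank3Bi] <;> ring

/-- For `b` as above: a pair `(f,g)` of endomorphisms of `𝔽_p³` is adjoint for `b`
(`b(f u, v) = b(u, g v)` for all `u,v`) if, and only if, `f = g = α·id` for a scalar `α`.
Hence `α ↦ (α·1, α·1)` is a bijection of `𝔽_p` onto `Adj(b)` (so `Adj(b) ≅ 𝔽_p` with the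
identity involution as a ring with involution), and `b` is `⊥`-indecomposable. -/
theorem adjoints_of_free_rank3 {p : ℕ} (hp : p.Prime) :
    (∀ f g : Module.End (ZMod p) (Fin 3 → ZMod p),
      (∀ u v : Fin 3 → ZMod p, freeRank3Bi p (f u) v = freeRank3Bi p u (g v)) ↔
        ∃ α : ZMod p, f = α • (1 : Module.End (ZMod p) (Fin 3 → ZMod p)) ∧
          g = α • (1 : Module.End (ZMod p) (Fin 3 → ZMod p))) ∧
    Set.BijOn
      (fun α : ZMod p => (α • (1 : Module.End (ZMod p) (Fin 3 → ZMod p)),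
        α • (1 : Module.End (ZMod p) (Fin 3 → ZMod p))))
      Set.univ
      {fg : Module.End (ZMod p) (Fin 3 → ZMod p) × Module.End (ZMod p) (Fin 3 → ZMod p) |
        ∀ u v : Fin 3 → ZMod p, freeRank3Bi p (fg.1 u) v = freeRank3Bi p u (fg.2 v)} ∧
    ¬ ∃ X Y : Submodule (ZMod p) (Fin 3 → ZMod p), X ≠ ⊥ ∧ Y ≠ ⊥ ∧ IsCompl X Y ∧
        ∀ x ∈ X, ∀ y ∈ Y, freeRank3Bi p x y = 0 := by
  have : Fact p.Prime := ⟨hp⟩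
  refine ⟨freeRank3Bi_adjoint_iff, ⟨?_, ?_, ?_⟩, ?_⟩
  · intro α _
    exact (freeRank3Bi_adjoint_iff _ _).2 ⟨α, rfl, rfl⟩
  · intro α _ β _ h
    have h1 := congrFun (LinearMap.congr_fun (congrArg Prod.fst h) (Pi.single 0 1)) 0
    simpa using h1
  · rintro ⟨f, g⟩ h
    obtain ⟨α, hf, hg⟩ := (freeRank3Bi_adjoint_iff f g).1 h
    exact ⟨α, trivial, Prod.ext hf.symm hg.symm⟩
  · rintro ⟨X, Y, hX, hY, hc, hb⟩
    obtain ⟨x, hx, hx0⟩ := X.ne_bot_iff.1 hX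
    obtain ⟨y, hy, hy0⟩ := Y.ne_bot_iff.1 hY
    set π : Module.End (ZMod p) (Fin 3 → ZMod p) := X.projection Y hc
    have hπX : ∀ z ∈ X, π z = z := fun z hz =>
      Submodule.projection_apply_left hc ⟨z, hz⟩
    have hπY : ∀ z ∈ Y, π z = 0 := fun z hz =>
      Submodule.projection_apply_right hc ⟨z, hz⟩
    obtain ⟨α, hα, -⟩ := (freeRank3Bi_adjoint_iff π π).1 (by
      intro u v
      obtain ⟨a, ha, c, hcY, rfl⟩ :=
        Submodule.mem_sup.1 (hc.sup_eq_top ▸ Submodule.mem_top : u ∈ X ⊔ Y)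
      obtain ⟨a', ha', c', hcY', rfl⟩ :=
        Submodule.mem_sup.1 (hc.sup_eq_top ▸ Submodule.mem_top : v ∈ X ⊔ Y)
      rw [map_add, map_add, hπX a ha, hπX a' ha', hπY c hcY, hπY c' hcY', add_zero, add_zero,
        freeRank3Bi_add_right, freeRank3Bi_add_left, hb a ha c' hcY',
        freeRank3Bi_swap p c a', hb a' ha' c hcY, neg_zero])
    have h1 := hπX x hx
    have h0 := hπY y hy
    rw [hα] at h1 h0
    have hα0 : α = 0 := (smul_eq_zero.1 (show α • y = 0 from h0)).resolve_right hy0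
    subst hα0
    exact hx0 (by simpa using h1.symm)
end
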